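/- arXiv:math/0303370 — 2 statements merged into one kernel-verified Lean document; each statement's English description precedes it below -/
import Mathlib

section
/- Let A be an n×n type-II matrix. Then N_A is a Bose-Mesner algebra: it is a linear subspace of the n×n complex matrices containing the identity matrix I and the all-ones matrix J (with Θ_A(I) = J and Θ_A(J) = nI); it is closed under matrix multiplication, under the Schur product, and under transposition; and matrix multiplication restricted to N_A is commutative (MN = NM for all M, N ∈ N_A). -/
open Matrix

variable {m : Type*} [Fintype m] [DecidableEq m]

/-- The Schur (entrywise) inverse `A^(-)` of a matrix: `(A^(-))_{ij} = (A_{ij})⁻¹`. -/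
noncomputable def sinv (A : Matrix m m ℂ) : Matrix m m ℂ := Matrix.of fun i j => (A i j)⁻¹

/-- A type-II matrix: a Schur invertible matrix `W` with `W * (W^(-))ᵀ = n • I`,
where `n` is the size of the matrix. -/
def IsTypeII (A : Matrix m m ℂ) : Prop :=
  (∀ i j, A i j ≠ 0) ∧ A * (sinv A)ᵀ = (Fintype.card m : ℂ) • (1 : Matrix m m ℂ)

/-- `v_{ij} = (A e_i) ∘ (B e_j)`: the entrywise product of column `i` of `A`
with column `j` of `B`. -/
def colProd (A B : Matrix m m ℂ) (i j : m) : m → ℂ := fun k => A k i * B k j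

/-- Membership in the Nomura algebra `N_{A,B}`: every `v_{ij}` is an eigenvector of `M`. -/
def InNomura (A B M : Matrix m m ℂ) : Prop :=
  ∀ i j, ∃ c : ℂ, M.mulVec (colProd A B i j) = c • colProd A B i j

/-- `S = Θ_{A,B}(M)`: the matrix of eigenvalues, i.e. `M v_{ij} = S_{ij} v_{ij}` for all `i,j`. -/
def IsTheta (A B M S : Matrix m m ℂ) : Prop :=
  ∀ i j, M.mulVec (colProd A B i j) = S i j • colProd A B i j

/-- `(A,B)` is a Jones pair: `A` invertible, `B` Schur invertible, and
`X_A Δ_B X_A = Δ_B X_A Δ_B` and `X_A Δ_{Bᵀ} X_A = Δ_{Bᵀ} X_A Δ_{Bᵀ}`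
as operators on matrices. -/
def IsJonesPair (A B : Matrix m m ℂ) : Prop :=
  IsUnit A ∧ (∀ i j, B i j ≠ 0) ∧
  (∀ M : Matrix m m ℂ, A * (B ⊙ (A * M)) = B ⊙ (A * (B ⊙ M))) ∧
  (∀ M : Matrix m m ℂ, A * (Bᵀ ⊙ (A * M)) = Bᵀ ⊙ (A * (Bᵀ ⊙ M)))

/-- An invertible Jones pair: a Jones pair in which moreover `A` is Schur
invertible and `B` is invertible. -/
def IsInvertibleJonesPair (A B : Matrix m m ℂ) : Prop :=
  IsJonesPair A B ∧ (∀ i j, A i j ≠ 0) ∧ IsUnit B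

/-- `W` is a spin model: for some `d` with `d² = n`, `(d⁻¹ W, W^(-))` is an
invertible Jones pair. -/
def IsSpinModel (W : Matrix m m ℂ) : Prop :=
  ∃ d : ℂ, d ^ 2 = (Fintype.card m : ℂ) ∧ IsInvertibleJonesPair (d⁻¹ • W) (sinv W)

/-- Given an invertible Jones pair `(A,B)` with `A` symmetric, `K` is paired with
`H ∈ N_{A,B}` if `Kᵀ ∈ N_{A,Bᵀ}` and `Θ_{A,B}(H) = (Θ_{A,Bᵀ}(Kᵀ))ᵀ`. -/
def Paired (A B H K : Matrix m m ℂ) : Prop :=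
  ∃ S : Matrix m m ℂ, IsTheta A B H S ∧ IsTheta A Bᵀ Kᵀ Sᵀ

/-- The `4n × 4n` matrix with `4 × 4` block structure
`[[P, Q, R, R], [Q, P, R, R], [S, S, T, U], [S, S, U, T]]`. -/
def blockMat {n : ℕ} (P Q R S T U : Matrix (Fin n) (Fin n) ℂ) :
    Matrix (Fin 4 × Fin n) (Fin 4 × Fin n) ℂ :=
  Matrix.of fun x y =>
    (![![P, Q, R, R], ![Q, P, R, R], ![S, S, T, U], ![S, S, U, T]] x.1 y.1) x.2 y.2

/-- Yamada's `4n × 4n` matrix `V` built from `A`, `B` and `d` with `d² = n`. -/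
noncomputable def Vmat {n : ℕ} (A B : Matrix (Fin n) (Fin n) ℂ) (d : ℂ) :
    Matrix (Fin 4 × Fin n) (Fin 4 × Fin n) ℂ :=
  blockMat (d • A) (-(d • A)) (sinv B) (sinv B)ᵀ (d • A) (-(d • A))

lemma typeII_row {A : Matrix m m ℂ} (hA : IsTypeII A) (k l : m) :
    ∑ i, A k i * (A l i)⁻¹ = if k = l then (Fintype.card m : ℂ) else 0 := by
  have h := congrFun (congrFun hA.2 k) l
  simpa [Matrix.mul_apply, sinv, Matrix.one_apply] using h

lemma typeII_transpose [Nonempty m] {A : Matrix m m ℂ} (hA : IsTypeII A) : IsTypeII Aᵀ := by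
  refine ⟨fun i j => hA.1 j i, ?_⟩
  have hc : (Fintype.card m : ℂ) ≠ 0 := by exact_mod_cast Fintype.card_ne_zero
  have h1 : A * ((Fintype.card m : ℂ)⁻¹ • (sinv A)ᵀ) = 1 := by
    rw [Matrix.mul_smul, hA.2, smul_smul, inv_mul_cancel₀ hc, one_smul]
  have h2 := mul_eq_one_comm.mp h1
  rw [Matrix.smul_mul] at h2
  have h3 : (sinv A)ᵀ * A = (Fintype.card m : ℂ) • (1 : Matrix m m ℂ) := by
    rw [← h2, smul_smul, mul_inv_cancel₀ hc, one_smul]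
  have h4 := congrArg Matrix.transpose h3
  have h5 : (sinv Aᵀ)ᵀ = sinv A := rfl
  rw [h5]
  simpa [Matrix.transpose_mul] using h4

lemma isTheta_iff {A M S : Matrix m m ℂ} : IsTheta A (sinv A) M S ↔
    ∀ i j k, ∑ l, M k l * (A l i * (A l j)⁻¹) = S i j * (A k i * (A k j)⁻¹) := by
  unfold IsTheta
  refine forall_congr' fun i => forall_congr' fun j => ?_
  rw [funext_iff]
  rfl

lemma inNomura_iff {A M : Matrix m m ℂ} : InNomura A (sinv A) M ↔
    ∃ S, IsTheta A (sinv A) M S := by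
  constructor
  · intro h
    choose S hS using h
    exact ⟨Matrix.of S, hS⟩
  · rintro ⟨S, hS⟩ i j
    exact ⟨S i j, hS i j⟩

lemma theta_dual {A M S : Matrix m m ℂ} (hA : IsTypeII A)
    (h : IsTheta A (sinv A) M S) :
    IsTheta Aᵀ (sinv Aᵀ) Sᵀ ((Fintype.card m : ℂ) • M) := by
  rw [isTheta_iff] at h ⊢
  intro k p j
  simp only [Matrix.transpose_apply, Matrix.smul_apply, smul_eq_mul]
  have h1 : ∀ i, S i j * (A k i * (A p i)⁻¹) =
      A k j * ∑ l, M k l * (A l j)⁻¹ * (A l i * (A p i)⁻¹) := by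
    intro i
    have h2 := h i j k
    have hk := hA.1 k j
    have : S i j * (A k i * (A p i)⁻¹) =
        A k j * (A p i)⁻¹ * (S i j * (A k i * (A k j)⁻¹)) := by
      field_simp
    rw [this, ← h2, Finset.mul_sum, Finset.mul_sum]
    exact Finset.sum_congr rfl fun l _ => by ring
  rw [Finset.sum_congr rfl fun i _ => h1 i, ← Finset.mul_sum, Finset.sum_comm]
  simp_rw [← Finset.mul_sum, typeII_row hA]
  simp
  ring

lemma theta_mul {A M N S T : Matrix m m ℂ} (hM : IsTheta A (sinv A) M S)
    (hN : IsTheta A (sinv A) N T) : IsTheta A (sinv A) (M * N) (S ⊙ T) := by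
  intro i j
  rw [← Matrix.mulVec_mulVec, hN i j, Matrix.mulVec_smul, hM i j, smul_smul]
  simp [Matrix.hadamard, mul_comm]

lemma theta_smul {A M S : Matrix m m ℂ} (c : ℂ) (hM : IsTheta A (sinv A) M S) :
    IsTheta A (sinv A) (c • M) (c • S) := by
  intro i j
  rw [Matrix.smul_mulVec, hM i j, smul_smul]
  rfl

lemma nomura_smul {A M : Matrix m m ℂ} (c : ℂ) (hM : InNomura A (sinv A) M) :
    InNomura A (sinv A) (c • M) := by
  obtain ⟨S, hS⟩ := inNomura_iff.mp hM
  exact inNomura_iff.mpr ⟨_, theta_smul c hS⟩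

lemma theta_one (A : Matrix m m ℂ) :
    IsTheta A (sinv A) 1 (Matrix.of fun _ _ => (1 : ℂ)) := by
  intro i j
  simp

lemma theta_J [Nonempty m] {A : Matrix m m ℂ} (hA : IsTypeII A) :
    IsTheta A (sinv A) (Matrix.of fun _ _ => (1 : ℂ))
      ((Fintype.card m : ℂ) • (1 : Matrix m m ℂ)) := by
  rw [isTheta_iff]
  intro i j k
  have h := typeII_row (typeII_transpose hA) i j
  simp only [Matrix.transpose_apply] at h
  simp only [Matrix.of_apply, one_mul, h, Matrix.smul_apply, Matrix.one_apply, smul_eq_mul]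
  split_ifs with hij
  · subst hij
    rw [mul_inv_cancel₀ (hA.1 k i)]
    ring
  · simp

lemma nomura_had_transpose [Nonempty m] {A M N : Matrix m m ℂ} (hA : IsTypeII A)
    (hM : InNomura A (sinv A) M) (hN : InNomura A (sinv A) N) :
    InNomura A (sinv A) (M ⊙ N)ᵀ := by
  have hc : (Fintype.card m : ℂ) ≠ 0 := by exact_mod_cast Fintype.card_ne_zero
  obtain ⟨S, hS⟩ := inNomura_iff.mp hM
  obtain ⟨T, hT⟩ := inNomura_iff.mp hN
  have h := theta_dual (typeII_transpose hA) (theta_mul (theta_dual hA hS) (theta_dual hA hT))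
  rw [Matrix.transpose_transpose] at h
  have h2 := nomura_smul ((Fintype.card m : ℂ)⁻¹ * (Fintype.card m : ℂ)⁻¹)
    (inNomura_iff.mpr ⟨_, h⟩)
  convert h2 using 1
  ext i j
  simp only [Matrix.transpose_apply, Matrix.smul_apply, Matrix.hadamard_apply, smul_eq_mul]
  field_simp

lemma nomura_transpose [Nonempty m] {A M : Matrix m m ℂ} (hA : IsTypeII A)
    (hM : InNomura A (sinv A) M) : InNomura A (sinv A) Mᵀ := by
  have h := nomura_had_transpose hA hM (inNomura_iff.mpr ⟨_, theta_J hA⟩)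
  convert h using 2
  ext i j
  simp

lemma nomura_comm [Nonempty m] {A M N : Matrix m m ℂ} (hA : IsTypeII A)
    (hM : InNomura A (sinv A) M) (hN : InNomura A (sinv A) N) : M * N = N * M := by
  have hc : (Fintype.card m : ℂ) ≠ 0 := by exact_mod_cast Fintype.card_ne_zero
  obtain ⟨S, hS⟩ := inNomura_iff.mp hM
  obtain ⟨T, hT⟩ := inNomura_iff.mp hN
  have h1 := isTheta_iff.mp (theta_dual hA (theta_mul hS hT))
  have h2 := isTheta_iff.mp (theta_dual hA (theta_mul hT hS))
  rw [Matrix.hadamard_comm] at h2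
  ext i j
  have h3 := (h1 i j i).symm.trans (h2 i j i)
  simp only [Matrix.transpose_apply, Matrix.smul_apply, smul_eq_mul] at h3
  have h4 := mul_right_cancel₀ (mul_ne_zero (hA.1 i i) (inv_ne_zero (hA.1 j i))) h3
  exact mul_left_cancel₀ hc h4

theorem nomura_is_bose_mesner {n : ℕ} (hn : 0 < n) (A : Matrix (Fin n) (Fin n) ℂ)
    (hA : IsTypeII A) :
    (∀ M N : Matrix (Fin n) (Fin n) ℂ, InNomura A (sinv A) M → InNomura A (sinv A) N →
      InNomura A (sinv A) (M + N)) ∧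
    (∀ (c : ℂ) (M : Matrix (Fin n) (Fin n) ℂ), InNomura A (sinv A) M →
      InNomura A (sinv A) (c • M)) ∧
    InNomura A (sinv A) (1 : Matrix (Fin n) (Fin n) ℂ) ∧
    InNomura A (sinv A) (Matrix.of fun _ _ => (1 : ℂ)) ∧
    IsTheta A (sinv A) (1 : Matrix (Fin n) (Fin n) ℂ) (Matrix.of fun _ _ => (1 : ℂ)) ∧
    IsTheta A (sinv A) (Matrix.of fun _ _ => (1 : ℂ))
      ((n : ℂ) • (1 : Matrix (Fin n) (Fin n) ℂ)) ∧
    (∀ M N : Matrix (Fin n) (Fin n) ℂ, InNomura A (sinv A) M → InNomura A (sinv A) N →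
      InNomura A (sinv A) (M * N)) ∧
    (∀ M N : Matrix (Fin n) (Fin n) ℂ, InNomura A (sinv A) M → InNomura A (sinv A) N →
      InNomura A (sinv A) (M ⊙ N)) ∧
    (∀ M : Matrix (Fin n) (Fin n) ℂ, InNomura A (sinv A) M → InNomura A (sinv A) Mᵀ) ∧
    (∀ M N : Matrix (Fin n) (Fin n) ℂ, InNomura A (sinv A) M → InNomura A (sinv A) N →
      M * N = N * M) := by
  haveI : Nonempty (Fin n) := ⟨⟨0, hn⟩⟩
  have hJ := theta_J hA
  refine ⟨?_, fun c M hM => nomura_smul c hM, inNomura_iff.mpr ⟨_, theta_one A⟩,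
    inNomura_iff.mpr ⟨_, hJ⟩, theta_one A, by simpa using hJ, ?_, ?_,
    fun M hM => nomura_transpose hA hM, fun M N hM hN => nomura_comm hA hM hN⟩
  · intro M N hM hN i j
    obtain ⟨c, hc⟩ := hM i j
    obtain ⟨d, hd⟩ := hN i j
    exact ⟨c + d, by rw [Matrix.add_mulVec, hc, hd, add_smul]⟩
  · intro M N hM hN
    obtain ⟨S, hS⟩ := inNomura_iff.mp hM
    obtain ⟨T, hT⟩ := inNomura_iff.mp hN
    exact inNomura_iff.mpr ⟨_, theta_mul hS hT⟩
  · intro M N hM hN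
    simpa using nomura_transpose hA (nomura_had_transpose hA hM hN)
end

section
/- Let A and B be n×n type-II matrices. If F, G ∈ N_{A,B}, then F∘Gᵀ ∈ N_A ∩ N_B, with Θ_A(F∘Gᵀ) = n^{-1}·Θ_{A,B}(F)·Θ_{A,B}(G)ᵀ and Θ_B(F∘Gᵀ) = n^{-1}·Θ_{A,B}(F)ᵀ·Θ_{A,B}(G). -/
open Matrix

variable {m : Type*} [Fintype m] [DecidableEq m]

theorem aux_rows {n : ℕ} {B : Matrix (Fin n) (Fin n) ℂ} (hB : IsTypeII B) (k l : Fin n) :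
    ∑ r, B k r * (B l r)⁻¹ = if k = l then (n : ℂ) else 0 := by
  have h := congrFun (congrFun hB.2 k) l
  simpa [Matrix.mul_apply, sinv, Matrix.one_apply] using h

theorem aux_cols {n : ℕ} (hn : 0 < n) {B : Matrix (Fin n) (Fin n) ℂ} (hB : IsTypeII B)
    (s r : Fin n) :
    ∑ l, B l s * (B l r)⁻¹ = if s = r then (n : ℂ) else 0 := by
  have hn' : (n : ℂ) ≠ 0 := by exact_mod_cast hn.ne'
  have h1 : B * ((n : ℂ)⁻¹ • (sinv B)ᵀ) = 1 := by
    rw [Matrix.mul_smul, hB.2, smul_smul]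
    simp [hn']
  have h2 := mul_eq_one_comm.mp h1
  have h3 := congrFun (congrFun h2 r) s
  simp only [Matrix.mul_apply, sinv, Matrix.one_apply, Matrix.smul_apply, Matrix.transpose_apply,
    Matrix.of_apply, smul_eq_mul, mul_assoc] at h3
  rw [← Finset.mul_sum, inv_mul_eq_iff_eq_mul₀ hn'] at h3
  rw [Finset.sum_congr rfl (fun l _ => mul_comm (B l s) _), h3]
  by_cases h : s = r
  · simp [h]
  · simp [h, Ne.symm h]

theorem aux_theta {n : ℕ} {A B F SF : Matrix (Fin n) (Fin n) ℂ}
    (hF : IsTheta A B F SF) (k i r : Fin n) :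
    ∑ l, F k l * (A l i * B l r) = SF i r * (A k i * B k r) := by
  have h := congrFun (hF i r) k
  simpa [Matrix.mulVec, dotProduct, colProd] using h

theorem aux_formula {n : ℕ} {A B F SF : Matrix (Fin n) (Fin n) ℂ} (hB : IsTypeII B)
    (hF : IsTheta A B F SF) (k l i : Fin n) :
    (n : ℂ) * (F k l * A l i) = A k i * ∑ r, SF i r * B k r * (B l r)⁻¹ := by
  have h : ∑ r, (∑ p, F k p * (A p i * B p r)) * (B l r)⁻¹
      = ∑ r, (SF i r * (A k i * B k r)) * (B l r)⁻¹ :=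
    Finset.sum_congr rfl fun r _ => by rw [aux_theta hF]
  have e : ∑ r, (∑ p, F k p * (A p i * B p r)) * (B l r)⁻¹ = (n : ℂ) * (F k l * A l i) := by
    simp only [Finset.sum_mul]
    rw [Finset.sum_comm]
    have : ∀ p, ∑ r, F k p * (A p i * B p r) * (B l r)⁻¹
        = F k p * A p i * (if p = l then (n : ℂ) else 0) := fun p => by
      rw [← aux_rows hB, Finset.mul_sum]
      exact Finset.sum_congr rfl fun r _ => by ring
    simp only [this]
    simp
    ring
  rw [← e, h, Finset.mul_sum]
  exact Finset.sum_congr rfl fun r _ => by ring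

theorem aux_left {n : ℕ} (hn : 0 < n) {A B G SG : Matrix (Fin n) (Fin n) ℂ}
    (hA : IsTypeII A) (hB : IsTypeII B)
    (hG : IsTheta A B G SG) (k j r : Fin n) :
    ∑ l, G l k * (A l j)⁻¹ * (B l r)⁻¹ = SG j r * (A k j)⁻¹ * (B k r)⁻¹ := by
  have hn' : (n : ℂ) ≠ 0 := by exact_mod_cast hn.ne'
  have key : (n : ℂ) * A k j * ∑ l, G l k * (A l j)⁻¹ * (B l r)⁻¹
      = (n : ℂ) * (SG j r * (B k r)⁻¹) := by
    have h1 : ∀ l, (n : ℂ) * A k j * (G l k * (A l j)⁻¹ * (B l r)⁻¹)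
        = ∑ s, SG j s * (B k s)⁻¹ * (B l s * (B l r)⁻¹) := fun l => by
      have h := aux_formula hB hG l k j
      have ha := hA.1 l j
      calc _ = ((n : ℂ) * (G l k * A k j)) * (A l j)⁻¹ * (B l r)⁻¹ := by ring
        _ = (A l j * (A l j)⁻¹) * ((∑ s, SG j s * B l s * (B k s)⁻¹) * (B l r)⁻¹) := by
          rw [h]; ring
        _ = _ := by
          rw [mul_inv_cancel₀ ha, one_mul, Finset.sum_mul]
          exact Finset.sum_congr rfl fun s _ => by ring
    rw [Finset.mul_sum, Finset.sum_congr rfl fun l _ => h1 l, Finset.sum_comm]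
    simp only [← Finset.mul_sum, aux_cols hn hB]
    simp
    ring
  have ha := hA.1 k j
  apply mul_left_cancel₀ (mul_ne_zero hn' ha)
  rw [key]
  field_simp

theorem aux_main {n : ℕ} (hn : 0 < n)
    {A B F G SF SG : Matrix (Fin n) (Fin n) ℂ}
    (hA : IsTypeII A) (hB : IsTypeII B)
    (hF : IsTheta A B F SF) (hG : IsTheta A B G SG) :
    IsTheta A (sinv A) (F ⊙ Gᵀ) ((n : ℂ)⁻¹ • (SF * SGᵀ)) := by
  have hn' : (n : ℂ) ≠ 0 := by exact_mod_cast hn.ne'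
  intro i j
  funext k
  simp only [Matrix.mulVec, dotProduct, colProd, sinv, Matrix.hadamard_apply,
    Matrix.transpose_apply, Matrix.of_apply, Pi.smul_apply, smul_eq_mul, Matrix.smul_apply,
    Matrix.mul_apply]
  apply mul_left_cancel₀ hn'
  have h1 : ∀ l, (n : ℂ) * (F k l * G l k * (A l i * (A l j)⁻¹))
      = ∑ r, A k i * SF i r * B k r * (G l k * (A l j)⁻¹ * (B l r)⁻¹) := fun l => by
    calc _ = ((n : ℂ) * (F k l * A l i)) * (G l k * (A l j)⁻¹) := by ring
      _ = _ := by
        rw [aux_formula hB hF, Finset.mul_sum, Finset.sum_mul]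
        exact Finset.sum_congr rfl fun r _ => by ring
  rw [Finset.mul_sum, Finset.sum_congr rfl fun l _ => h1 l, Finset.sum_comm]
  simp only [← Finset.mul_sum, aux_left hn hA hB hG]
  rw [mul_assoc (n : ℂ)⁻¹, mul_inv_cancel_left₀ hn', Finset.sum_mul]
  refine Finset.sum_congr rfl fun r _ => ?_
  have hb := hB.1 k r
  field_simp

theorem aux_swap {n : ℕ} {A B F SF : Matrix (Fin n) (Fin n) ℂ}
    (hF : IsTheta A B F SF) : IsTheta B A F SFᵀ := by
  intro i j
  have e : colProd B A i j = colProd A B j i := by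
    funext k
    simp [colProd, mul_comm]
  rw [e]
  exact hF j i

theorem schur_product_transpose_in_NA_NB {n : ℕ} (hn : 0 < n)
    (A B F G SF SG : Matrix (Fin n) (Fin n) ℂ)
    (hA : IsTypeII A) (hB : IsTypeII B)
    (hF : IsTheta A B F SF) (hG : IsTheta A B G SG) :
    IsTheta A (sinv A) (F ⊙ Gᵀ) ((n : ℂ)⁻¹ • (SF * SGᵀ)) ∧
    IsTheta B (sinv B) (F ⊙ Gᵀ) ((n : ℂ)⁻¹ • (SFᵀ * SG)) := by
  refine ⟨aux_main hn hA hB hF hG, ?_⟩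
  have h := aux_main hn hB hA (aux_swap hF) (aux_swap hG)
  rwa [Matrix.transpose_transpose] at h
end
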